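/- arXiv:2602.07221 — 2 statements merged into one kernel-verified Lean document; each statement's English description precedes it below -/
import Mathlib

section
/- Let s ∈ (0,1) and let N > 2s be a positive integer, and let ρ : ℝ → ℝ be a C^∞ function with compact support in (−2,2), 0 ≤ ρ ≤ 1 and ρ ≡ 1 on (−1,1). Then the function (y,z) ↦ (ρ(|y|²) − ρ(|z|²)) (|z|^{2s−N} − |y|^{2s−N}) / |z−y|^{N+2s} is Lebesgue integrable on ℝ^N × ℝ^N. -/
open MeasureTheory Real Filter Metric

noncomputable section

/-- Euclidean space `ℝ^N`. -/
abbrev Euc (N : ℕ) := EuclideanSpace ℝ (Fin N)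

/-- The normalizing constant `c_{N,s}` of the fractional Laplacian. -/
def cNs (N : ℕ) (s : ℝ) : ℝ :=
  Real.pi ^ ((N : ℝ) / 2) * s * (4 : ℝ) ^ s * Real.Gamma (((N : ℝ) + 2 * s) / 2) /
    Real.Gamma (1 - s)

/-- The constant `b_{N,s}` of the fundamental solution. -/
def bNs (N : ℕ) (s : ℝ) : ℝ :=
  Real.pi ^ (-(N : ℝ) / 2) * (4 : ℝ) ^ (-s) * Real.Gamma (((N : ℝ) - 2 * s) / 2) /
    Real.Gamma s

/-- The fractional Laplacian `(-Δ)^s u (x)`, via the absolutely convergent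
symmetrized integral `-(c_{N,s}/2) ∫ (u(x+h)+u(x-h)-2u(x))/|h|^{N+2s} dh`. -/
def fracLap (N : ℕ) (s : ℝ) (u : Euc N → ℝ) (x : Euc N) : ℝ :=
  -(cNs N s / 2) * ∫ h : Euc N, (u (x + h) + u (x - h) - 2 * u x) / ‖h‖ ^ ((N : ℝ) + 2 * s)

/-- `φ ∈ C_c^∞(Ω)`. -/
def IsTestFn (N : ℕ) (Ω : Set (Euc N)) (φ : Euc N → ℝ) : Prop :=
  ContDiff ℝ (⊤ : ℕ∞) φ ∧ HasCompactSupport φ ∧ tsupport φ ⊆ Ω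

/-- The signed distance `δ̄(z) = dist(z, Ωᶜ) - dist(z, Ω)`. -/
def signedDistFn (N : ℕ) (Ω : Set (Euc N)) (z : Euc N) : ℝ :=
  Metric.infDist z Ωᶜ - Metric.infDist z Ω

/-- A bounded open set of class `C^{1,1}`: the signed distance is differentiable with
Lipschitz gradient on a neighborhood of `∂Ω`. -/
def IsC11 (N : ℕ) (Ω : Set (Euc N)) : Prop :=
  IsOpen Ω ∧ Bornology.IsBounded Ω ∧
    ∃ U : Set (Euc N), IsOpen U ∧ frontier Ω ⊆ U ∧
      (∀ z ∈ U, DifferentiableAt ℝ (signedDistFn N Ω) z) ∧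
      ∃ K : NNReal, LipschitzOnWith K (fun z => gradient (signedDistFn N Ω) z) U

/-- `δ(z) = dist(z, ∂Ω)`. -/
def bdist (N : ℕ) (Ω : Set (Euc N)) (z : Euc N) : ℝ := Metric.infDist z (frontier Ω)

/-- The outward unit normal `ν = -∇δ̄` (meaningful on `∂Ω`). -/
def outNormal (N : ℕ) (Ω : Set (Euc N)) (θ : Euc N) : Euc N :=
  -gradient (signedDistFn N Ω) θ

/-- The surface measure on `∂Ω`: the `(N-1)`-dimensional Hausdorff measure
restricted to `∂Ω`. -/
def surf (N : ℕ) (Ω : Set (Euc N)) : Measure (Euc N) :=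
  (μH[(N : ℝ) - 1]).restrict (frontier Ω)

/-- `g` is the fractional normal trace `γ_0^s(w)` on `∂Ω`. -/
def HasFracTrace (N : ℕ) (s : ℝ) (Ω : Set (Euc N)) (w g : Euc N → ℝ) : Prop :=
  ContinuousOn g (frontier Ω) ∧
    ∀ θ ∈ frontier Ω,
      Filter.Tendsto (fun z => w z / bdist N Ω z ^ s) (nhdsWithin θ Ω) (nhds (g θ))

/-- `G` is a Green function of `(-Δ)^s` in `Ω` with pole at `x`, with constant `C`
in the Green function estimate. -/
def IsGreenFn (N : ℕ) (s : ℝ) (Ω : Set (Euc N)) (C : ℝ) (x : Euc N) (G : Euc N → ℝ) : Prop :=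
  Integrable G ∧ (∀ z, z ∉ Ω → G z = 0) ∧
    (∀ φ, IsTestFn N Ω φ → ∫ z in Ω, G z * fracLap N s φ z = φ x) ∧
    ∀ z, z ≠ x → 0 ≤ G z ∧
      G z ≤ C * min (‖x - z‖ ^ (2 * s - (N : ℝ)))
        (bdist N Ω x ^ s * bdist N Ω z ^ s * ‖x - z‖ ^ (-(N : ℝ)))

/-- The quadratic form `E_s(u,v)` associated with `(-Δ)^s`. -/
def Es (N : ℕ) (s : ℝ) (u v : Euc N → ℝ) : ℝ :=
  (cNs N s / 2) *
    ∫ p : Euc N × Euc N, (u p.1 - u p.2) * (v p.1 - v p.2) / ‖p.1 - p.2‖ ^ ((N : ℝ) + 2 * s)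

/-- `u` is a weak solution of `(-Δ)^s u = f(·,u)` in `Ω`, `u = 0` outside `Ω`. -/
def IsWeakSolution (N : ℕ) (s : ℝ) (Ω : Set (Euc N)) (f : Euc N → ℝ → ℝ) (u : Euc N → ℝ) :
    Prop :=
  (∃ C : NNReal, HolderWith C s.toNNReal u) ∧ (∀ z, z ∉ Ω → u z = 0) ∧
    ∀ φ, IsTestFn N Ω φ → Es N s u φ = ∫ z in Ω, f z (u z) * φ z

/-- Locally `β`-Hölder continuous function. -/
def LocHolder {X : Type*} [PseudoEMetricSpace X] (β : ℝ) (f : X → ℝ) : Prop :=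
  ∀ p : X, ∃ t ∈ nhds p, ∃ C : NNReal, HolderOnWith C β.toNNReal f t

lemma aux_real (a : ℝ) (ha : 0 < a) (ρ : ℝ → ℝ) (hρsm : ContDiff ℝ (⊤ : ℕ∞) ρ)
    (hρc : HasCompactSupport ρ)
    (hρsupp : tsupport ρ ⊆ Set.Ioo (-2 : ℝ) 2)
    (hρ0 : ∀ t, 0 ≤ ρ t) (hρle : ∀ t, ρ t ≤ 1)
    (hρ1 : ∀ t ∈ Set.Ioo (-1 : ℝ) 1, ρ t = 1) :
    ∃ C : ℝ, 0 ≤ C ∧ ∀ u v : ℝ, 0 ≤ u → u ≤ v →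
      |ρ (u ^ 2) - ρ (v ^ 2)| * |v ^ (-a) - u ^ (-a)| ≤
        C * ((Set.Iic 2).indicator (fun r : ℝ => 1 + r ^ (-a)) u * min 1 ((v - u) ^ 2)) := by
  obtain ⟨L, hL⟩ := ContDiff.lipschitzWith_of_hasCompactSupport hρc hρsm (by simp)
  have hz : ∀ t, 2 ≤ t → ρ t = 0 := by
    intro t ht
    by_contra h
    have := hρsupp (subset_tsupport _ (Function.mem_support.2 h))
    linarith [this.2]
  obtain ⟨K, hK⟩ : ∃ K, LipschitzOnWith K (fun r : ℝ => r ^ (-a)) (Set.Icc (1/2) 2) := by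
    apply ContDiffOn.exists_lipschitzOnWith (n := 1) _ one_ne_zero (convex_Icc _ _) isCompact_Icc
    intro x hx
    have : x ≠ 0 := by have := hx.1; intro h; norm_num [h] at this
    exact (Real.contDiffAt_rpow_const_of_ne this).contDiffWithinAt
  refine ⟨4 + 4 * L * K, by positivity, ?_⟩
  intro u v hu huv
  have hv : 0 ≤ v := hu.trans huv
  have hmin : 0 ≤ min 1 ((v - u) ^ 2) := by positivity
  have hua : 0 ≤ u ^ (-a) := by positivity
  have hva : 0 ≤ v ^ (-a) := by positivity
  have hLK : (0 : ℝ) ≤ 4 * L * K := by positivity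
  have hA0 : 0 ≤ (Set.Iic 2).indicator (fun r : ℝ => 1 + r ^ (-a)) u := by
    unfold Set.indicator; split_ifs <;> linarith
  have hR : 0 ≤ (4 + 4 * L * K) *
      ((Set.Iic 2).indicator (fun r : ℝ => 1 + r ^ (-a)) u * min 1 ((v - u) ^ 2)) := by
    positivity
  by_cases h1 : 2 ≤ u ^ 2
  · rw [hz _ h1, hz (v ^ 2) (by nlinarith)]; simpa using hR
  by_cases h2 : v < 1
  · rw [hρ1 (u ^ 2) ⟨by nlinarith, by nlinarith⟩, hρ1 (v ^ 2) ⟨by nlinarith, by nlinarith⟩]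
    simpa using hR
  push Not at h1 h2
  have hu2 : u < 3 / 2 := by nlinarith
  rw [Set.indicator_of_mem (by simp; linarith)]
  have hv1 : v ^ (-a) ≤ 1 := Real.rpow_le_one_of_one_le_of_nonpos h2 (by linarith)
  have hρd : |ρ (u ^ 2) - ρ (v ^ 2)| ≤ 1 := by
    rw [abs_le]
    constructor <;> linarith [hρ0 (u ^ 2), hρ0 (v ^ 2), hρle (u ^ 2), hρle (v ^ 2)]
  have hd : |v ^ (-a) - u ^ (-a)| ≤ 1 + u ^ (-a) := by
    rw [abs_le]; constructor <;> linarith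
  by_cases h3 : 1 / 2 ≤ v - u
  · have hm : 1 / 4 ≤ min 1 ((v - u) ^ 2) := le_min (by norm_num) (by nlinarith)
    have e1 : |ρ (u ^ 2) - ρ (v ^ 2)| * |v ^ (-a) - u ^ (-a)| ≤ 1 * (1 + u ^ (-a)) := by gcongr
    have e2 : (1 + u ^ (-a)) * (1 / 4) ≤ (1 + u ^ (-a)) * min 1 ((v - u) ^ 2) := by gcongr
    nlinarith [mul_nonneg hLK (mul_nonneg (by linarith : 0 ≤ 1 + u ^ (-a)) hmin)]
  · push Not at h3
    have e1 : |ρ (u ^ 2) - ρ (v ^ 2)| ≤ L * (4 * (v - u)) := by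
      have := hL.dist_le_mul (u ^ 2) (v ^ 2)
      rw [Real.dist_eq, Real.dist_eq] at this
      refine this.trans ?_
      gcongr
      rw [abs_le]
      constructor <;> nlinarith
    have e2 : |v ^ (-a) - u ^ (-a)| ≤ K * (v - u) := by
      have := hK.dist_le_mul v ⟨by linarith, by linarith⟩ u ⟨by linarith, by linarith⟩
      rw [Real.dist_eq, Real.dist_eq, abs_of_nonneg (by linarith : 0 ≤ v - u)] at this
      exact this
    have hm : min 1 ((v - u) ^ 2) = (v - u) ^ 2 := min_eq_right (by nlinarith)
    rw [hm]
    have e3 : |ρ (u ^ 2) - ρ (v ^ 2)| * |v ^ (-a) - u ^ (-a)|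
        ≤ (L * (4 * (v - u))) * (K * (v - u)) := by gcongr
    have hd2 : 0 ≤ (v - u) ^ 2 := by positivity
    have e4 : 0 ≤ (4 * L * K) * (u ^ (-a) * (v - u) ^ 2) := by positivity
    have e5 : 0 ≤ u ^ (-a) * (v - u) ^ 2 := by positivity
    nlinarith

lemma aux_near (N : ℕ) (hN : 0 < N) (p : ℝ) (hp : 0 < p) (R : ℝ) (S : Set ℝ)
    (hS : MeasurableSet S) (hSR : S ⊆ Set.Iic R) :
    Integrable (fun x : Euc N => S.indicator (fun r : ℝ => r ^ (p - N)) ‖x‖) := by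
  have : Nonempty (Fin N) := ⟨⟨0, hN⟩⟩
  rw [integrable_fun_norm_addHaar volume (f := S.indicator (fun r : ℝ => r ^ (p - N)))]
  have h : IntegrableOn (fun r : ℝ => r ^ (p - 1)) (Set.Ioc 0 (max R 0)) :=
    (intervalIntegrable_iff_integrableOn_Ioc_of_le (le_max_right _ _)).1
      (intervalIntegral.intervalIntegrable_rpow' (by linarith))
  have h2 : IntegrableOn (fun r : ℝ => r ^ (p - 1)) (Set.Ioi 0 ∩ S) :=
    h.mono_set (fun x hx => ⟨hx.1, (hSR hx.2).trans (le_max_left _ _)⟩)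
  have h3 := (integrable_indicator_iff (measurableSet_Ioi.inter hS)).2 h2
  refine (h3.integrableOn (s := Set.Ioi 0)).congr_fun ?_ measurableSet_Ioi
  intro r hr
  have hr : 0 < r := hr
  by_cases hrS : r ∈ S
  · rw [Set.indicator_of_mem (show r ∈ Set.Ioi 0 ∩ S from ⟨hr, hrS⟩)]
    simp only [Set.indicator_of_mem hrS, smul_eq_mul, finrank_euclideanSpace_fin]
    rw [← Real.rpow_natCast, ← Real.rpow_add hr, Nat.cast_sub hN]
    congr 1; push_cast; ring
  · rw [Set.indicator_of_notMem (fun h => hrS h.2)]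
    simp [Set.indicator_of_notMem hrS]

lemma aux_far (N : ℕ) (hN : 0 < N) (p : ℝ) (hp : p < 0) :
    Integrable (fun x : Euc N => (Set.Ioi 1).indicator (fun r : ℝ => r ^ (p - N)) ‖x‖) := by
  have : Nonempty (Fin N) := ⟨⟨0, hN⟩⟩
  rw [integrable_fun_norm_addHaar volume (f := (Set.Ioi 1).indicator (fun r : ℝ => r ^ (p - N)))]
  have h2 : IntegrableOn (fun r : ℝ => r ^ (p - 1)) (Set.Ioi 1) :=
    integrableOn_Ioi_rpow_of_lt (by linarith) one_pos
  have h3 := (integrable_indicator_iff measurableSet_Ioi).2 h2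
  refine (h3.integrableOn (s := Set.Ioi 0)).congr_fun ?_ measurableSet_Ioi
  intro r hr
  have hr : 0 < r := hr
  by_cases hrS : r ∈ Set.Ioi (1 : ℝ)
  · rw [Set.indicator_of_mem hrS]
    simp only [Set.indicator_of_mem hrS, smul_eq_mul, finrank_euclideanSpace_fin]
    rw [← Real.rpow_natCast, ← Real.rpow_add hr, Nat.cast_sub hN]
    congr 1; push_cast; ring
  · rw [Set.indicator_of_notMem hrS]
    simp [Set.indicator_of_notMem hrS]

/-- integrability of the double integrand of Lemma 1.8 (case `N > 2s`). -/
theorem statement7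
    (s : ℝ) (hs0 : 0 < s) (hs1 : s < 1)
    (N : ℕ) (hN : 2 * s < N)
    (ρ : ℝ → ℝ) (hρsm : ContDiff ℝ (⊤ : ℕ∞) ρ) (hρc : HasCompactSupport ρ)
    (hρsupp : tsupport ρ ⊆ Set.Ioo (-2 : ℝ) 2)
    (hρ0 : ∀ t, 0 ≤ ρ t) (hρle : ∀ t, ρ t ≤ 1)
    (hρ1 : ∀ t ∈ Set.Ioo (-1 : ℝ) 1, ρ t = 1) :
    Integrable (fun p : Euc N × Euc N =>
      (ρ (‖p.1‖ ^ 2) - ρ (‖p.2‖ ^ 2)) *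
        (‖p.2‖ ^ (2 * s - (N : ℝ)) - ‖p.1‖ ^ (2 * s - (N : ℝ))) /
        ‖p.2 - p.1‖ ^ ((N : ℝ) + 2 * s)) := by
  have hN0 : 0 < N := by
    have : (0 : ℝ) < N := by linarith
    exact_mod_cast this
  have ha : 0 < (N : ℝ) - 2 * s := by linarith
  obtain ⟨C, hC0, hC⟩ := aux_real _ ha ρ hρsm hρc hρsupp hρ0 hρle hρ1
  rw [neg_sub] at hC
  set A : ℝ → ℝ := (Set.Iic 2).indicator (fun r : ℝ => 1 + r ^ (2 * s - (N : ℝ))) with hA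
  set B : ℝ → ℝ := fun r => (Set.Iic 1).indicator (fun r : ℝ => r ^ ((2 - 2 * s) - (N : ℝ))) r
    + (Set.Ioi 1).indicator (fun r : ℝ => r ^ (- (2 * s) - (N : ℝ))) r with hB
  have hA0 : ∀ r, 0 ≤ r → 0 ≤ A r := by
    intro r hr
    simp only [hA, Set.indicator]
    split_ifs <;> positivity
  have hAi : Integrable (fun x : Euc N => A ‖x‖) := by
    have h1 := aux_near N hN0 (2 * s) (by linarith) 2 (Set.Iic 2) measurableSet_Iic le_rfl
    have h2 := aux_near N hN0 N (by exact_mod_cast hN0) 2 (Set.Iic 2) measurableSet_Iic le_rfl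
    refine (h2.add h1).congr (ae_of_all _ fun x => ?_)
    simp only [hA, Pi.add_apply, Set.indicator]
    split_ifs <;> simp
  have hBi : Integrable (fun x : Euc N => B ‖x‖) :=
    (aux_near N hN0 (2 - 2 * s) (by linarith) 1 (Set.Iic 1) measurableSet_Iic le_rfl).add
      (aux_far N hN0 (-(2 * s)) (by linarith))
  have hI : Integrable (fun p : Euc N × Euc N => A ‖p.2‖ * B ‖p.1 - p.2‖) :=
    hAi.convolution_integrand (ContinuousLinearMap.mul ℝ ℝ) hBi
  have hI2 : Integrable (fun p : Euc N × Euc N => A ‖p.1‖ * B ‖p.2 - p.1‖) := hI.swap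
  have hBeq : ∀ r, 0 < r → min 1 (r ^ 2) / r ^ ((N : ℝ) + 2 * s) = B r := by
    intro r hr
    rw [div_eq_mul_inv, ← Real.rpow_neg hr.le]
    by_cases h1 : r ≤ 1
    · have : min 1 (r ^ 2) = r ^ (2 : ℝ) := by
        rw [Real.rpow_two]; exact min_eq_right (by nlinarith)
      rw [this, ← Real.rpow_add hr]
      simp only [hB, Set.indicator, Set.mem_Iic, h1, Set.mem_Ioi, not_lt.2 h1, if_true, if_false]
      rw [add_zero]; congr 1; ring
    · have : min 1 (r ^ 2) = 1 := min_eq_left (by nlinarith)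
      rw [this]
      simp only [hB, Set.indicator, Set.mem_Iic, h1, Set.mem_Ioi, not_le.1 h1, if_true, if_false]
      rw [zero_add, one_mul]; congr 1; ring
  have hsym : ∀ u v : ℝ, 0 ≤ u → 0 ≤ v →
      |ρ (u ^ 2) - ρ (v ^ 2)| * |v ^ (2 * s - (N : ℝ)) - u ^ (2 * s - (N : ℝ))| ≤
        C * ((A u + A v) * min 1 ((v - u) ^ 2)) := by
    intro u v hu hv
    have hm : 0 ≤ min 1 ((v - u) ^ 2) := by positivity
    rcases le_total u v with h | h
    · refine (hC u v hu h).trans ?_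
      gcongr
      linarith [hA0 v hv]
    · rw [abs_sub_comm, abs_sub_comm (v ^ _)]
      refine (hC v u hv h).trans ?_
      rw [show (u - v) ^ 2 = (v - u) ^ 2 by ring]
      gcongr
      linarith [hA0 u hu]
  refine ((hI2.add hI).const_mul C).mono' ?_ (ae_of_all _ ?_)
  · have := hρsm.continuous.measurable
    exact Measurable.aestronglyMeasurable (by fun_prop)
  · rintro ⟨y, z⟩
    simp only [Pi.add_apply]
    rcases eq_or_ne z y with rfl | hne
    · have : 0 ≤ B 0 := by
        simp only [hB]
        apply add_nonneg <;> (unfold Set.indicator; split_ifs <;> positivity)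
      have h2 := hA0 ‖z‖ (norm_nonneg _)
      simp only [sub_self, norm_zero, zero_mul, zero_div]
      positivity
    have hr : 0 < ‖z - y‖ := norm_pos_iff.2 (sub_ne_zero.2 hne)
    have hd : (‖z‖ - ‖y‖) ^ 2 ≤ ‖z - y‖ ^ 2 := by
      rw [← sq_abs]
      gcongr
      exact abs_norm_sub_norm_le z y
    rw [norm_div, norm_mul, Real.norm_eq_abs, Real.norm_eq_abs, Real.norm_of_nonneg (by positivity),
      norm_sub_rev y z, ← hBeq _ hr]
    have h1 := hA0 ‖y‖ (norm_nonneg _)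
    have h2 := hA0 ‖z‖ (norm_nonneg _)
    calc _ ≤ C * ((A ‖y‖ + A ‖z‖) * min 1 ((‖z‖ - ‖y‖) ^ 2)) / ‖z - y‖ ^ ((N : ℝ) + 2 * s) := by
          exact div_le_div_of_nonneg_right (hsym _ _ (norm_nonneg _) (norm_nonneg _)) (by positivity)
      _ ≤ C * ((A ‖y‖ + A ‖z‖) * min 1 (‖z - y‖ ^ 2)) / ‖z - y‖ ^ ((N : ℝ) + 2 * s) := by
          gcongr
      _ = _ := by ring
end
end

section
/- Let N ≥ 2 be an integer and β ∈ (0,1). Then for all y, z ∈ ℝ^N with 0 < |y| ≤ |z|, one has | |y|^{1−N} − |z|^{1−N} | ≤ (N−1) ( (1−β)/(N+β−1) )^{1−β} |y|^{1−N−β} |z−y|^β. -/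
open MeasureTheory Real Filter Metric

noncomputable section

/-- One-dimensional version, via Young's inequality and integration. -/
theorem aux_one_dim (n β a d : ℝ) (hn : 1 < n) (hβ0 : 0 < β) (hβ1 : β < 1) (ha : 0 < a)
    (had : a < d) :
    a ^ (1 - n) - d ^ (1 - n) ≤
      (n - 1) * ((1 - β) / (n + β - 1)) ^ (1 - β) * a ^ (1 - n - β) * (d - a) ^ β := by
  have h1β : 0 < 1 - β := by linarith
  have hq : 0 < n + β - 1 := by linarith
  have hx : 0 < d - a := by linarith
  obtain ⟨p, hp⟩ : ∃ p, p = n / (1 - β) := ⟨_, rfl⟩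
  have hpm : p * (1 - β) = n := by rw [hp]; field_simp
  have hp1 : 1 < p := by rw [hp, lt_div_iff₀ h1β]; linarith
  have hMr : (1 - β) / (n + β - 1) = 1 / (p - 1) := by
    rw [div_eq_div_iff hq.ne' (by linarith)]; linarith
  obtain ⟨M, hM⟩ : ∃ M, M = a ^ (1 - p) * (1 / (p - 1)) := ⟨_, rfl⟩
  have hap : 0 < a ^ (1 - p) := rpow_pos_of_pos ha _
  have hp1' : 0 < 1 / (p - 1) := one_div_pos.2 (by linarith)
  have hMpos : 0 < M := by rw [hM]; positivity
  obtain ⟨K, hK⟩ : ∃ K, K = (d - a) ^ β * M ^ (1 - β) := ⟨_, rfl⟩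
  have hKpos : 0 < K := by rw [hK]; positivity
  have hK' : K = ((1 - β) / (n + β - 1)) ^ (1 - β) * a ^ (1 - n - β) * (d - a) ^ β := by
    rw [hK, hM, mul_rpow hap.le hp1'.le, ← rpow_mul ha.le, hMr]
    have : (1 - p) * (1 - β) = 1 - n - β := by linarith
    rw [this]; ring
  have h0 : (0 : ℝ) ∉ Set.uIcc a d := by
    rw [Set.uIcc_of_le had.le]; intro h; linarith [h.1]
  have hInt : ∀ r : ℝ, IntervalIntegrable (fun t : ℝ => t ^ r) volume a d := fun r =>
    intervalIntegral.intervalIntegrable_rpow (Or.inr h0)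
  have pt : ∀ t ∈ Set.Icc a d, t ^ (-n) ≤ K * (β / (d - a)) + K * ((1 - β) / M) * t ^ (-p) := by
    intro t ht
    have ht0 : 0 < t := lt_of_lt_of_le ha ht.1
    have htp : 0 < t ^ (-p) := rpow_pos_of_pos ht0 _
    have y := Real.geom_mean_le_arith_mean2_weighted hβ0.le h1β.le
      (one_div_pos.2 hx).le (div_pos htp hMpos).le (by ring)
    have e : t ^ (-n) = K * ((1 / (d - a)) ^ β * (t ^ (-p) / M) ^ (1 - β)) := by
      rw [hK, div_rpow zero_le_one hx.le, div_rpow htp.le hMpos.le, ← rpow_mul ht0.le, one_rpow]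
      have : -p * (1 - β) = -n := by linarith
      rw [this]
      have := (rpow_pos_of_pos hx β).ne'
      have := (rpow_pos_of_pos hMpos (1 - β)).ne'
      field_simp
    rw [e]
    calc _ ≤ K * _ := mul_le_mul_of_nonneg_left y hKpos.le
      _ = _ := by ring
  have hi := intervalIntegral.integral_mono_on had.le (hInt (-n))
    ((intervalIntegrable_const (c := K * (β / (d - a)))).add
      ((hInt (-p)).const_mul (K * ((1 - β) / M)))) pt
  rw [intervalIntegral.integral_add intervalIntegrable_const ((hInt (-p)).const_mul _),
    intervalIntegral.integral_const, intervalIntegral.integral_const_mul,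
    integral_rpow (Or.inr ⟨by linarith, h0⟩), integral_rpow (Or.inr ⟨by linarith, h0⟩)] at hi
  have e1 : -n + 1 = 1 - n := by ring
  have e2 : -p + 1 = 1 - p := by ring
  rw [e1, e2, smul_eq_mul] at hi
  have hdp : 0 < d ^ (1 - p) := rpow_pos_of_pos (ha.trans had) _
  have hb : (d ^ (1 - p) - a ^ (1 - p)) / (1 - p) ≤ M := by
    have : (d ^ (1 - p) - a ^ (1 - p)) / (1 - p) = M - d ^ (1 - p) * (1 / (p - 1)) := by
      have : 1 - p ≠ 0 := by linarith
      have : p - 1 ≠ 0 := by linarith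
      rw [hM]; field_simp; ring
    rw [this]; linarith [mul_pos hdp hp1']
  have hc : 0 ≤ K * ((1 - β) / M) := by positivity
  have h2 := mul_le_mul_of_nonneg_left hb hc
  have h3 : K * ((1 - β) / M) * M = K * (1 - β) := by field_simp
  have h4 : (d - a) * (K * (β / (d - a))) = K * β := by field_simp
  have h5 : (d ^ (1 - n) - a ^ (1 - n)) / (1 - n) ≤ K := by linarith
  have h6 : (d ^ (1 - n) - a ^ (1 - n)) / (1 - n) = (a ^ (1 - n) - d ^ (1 - n)) / (n - 1) := by
    rw [← neg_sub (a ^ (1 - n)), ← neg_sub n 1, neg_div_neg_eq]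
  rw [h6, div_le_iff₀ (by linarith), hK'] at h5
  linarith

/-- Hölder-type estimate on differences of powers `|·|^{1-N}`. -/
theorem statement16
    (N : ℕ) (hN : 2 ≤ N) (β : ℝ) (hβ0 : 0 < β) (hβ1 : β < 1) :
    ∀ y z : Euc N, 0 < ‖y‖ → ‖y‖ ≤ ‖z‖ →
      |‖y‖ ^ (1 - (N : ℝ)) - ‖z‖ ^ (1 - (N : ℝ))| ≤
        ((N : ℝ) - 1) * ((1 - β) / ((N : ℝ) + β - 1)) ^ (1 - β) *
          ‖y‖ ^ (1 - (N : ℝ) - β) * ‖z - y‖ ^ β := by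
  intro y z hy hyz
  have hn : (1 : ℝ) < N := by exact_mod_cast hN
  have hC : 0 ≤ ((N : ℝ) - 1) * ((1 - β) / ((N : ℝ) + β - 1)) ^ (1 - β) *
          ‖y‖ ^ (1 - (N : ℝ) - β) := by
    have : 0 ≤ (N : ℝ) - 1 := by linarith
    have : 0 ≤ (1 - β) / ((N : ℝ) + β - 1) := div_nonneg (by linarith) (by linarith)
    positivity
  rcases hyz.eq_or_lt with h | h
  · rw [← h, sub_self, abs_zero]
    exact mul_nonneg hC (by positivity)
  · rw [abs_of_nonneg (sub_nonneg.2 (rpow_le_rpow_of_nonpos hy hyz (by linarith)))]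
    refine (aux_one_dim N β _ _ hn hβ0 hβ1 hy h).trans ?_
    refine mul_le_mul_of_nonneg_left ?_ hC
    exact rpow_le_rpow (by linarith) (norm_sub_norm_le z y) hβ0.le
end
end
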